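/- Let p ≥ 1 and let y(k) = C A^k x0 be the nominal output from an arbitrary initial state x0 ∈ ℝ^n. Define the heuristic window size N(T) = ⌊(T+1)/(p+1)⌋. If T̄ satisfies T̄ + 1 ≥ ν(p+1) and p(T̄ + 1) ≥ μ(p+1) (equivalently T̄ ≥ max{ν(p+1) − 1, μ(p+1)/p − 1}), then Rank(Y_{N(T̄),T̄}) = Γ({y(k)}), where ν and μ are the observability and excitability indices. -/

import Mathlib

open Matrix

noncomputable section

/-- The observability matrix `O_N = [C; CA; …; CA^{N-1}]`, with block rows indexed by `Fin N`. -/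
def obsMat {n p : ℕ} (A : Matrix (Fin n) (Fin n) ℝ) (C : Matrix (Fin p) (Fin n) ℝ)
    (N : ℕ) : Matrix (Fin N × Fin p) (Fin n) ℝ :=
  fun ir j => (C * A ^ (ir.1 : ℕ)) ir.2 j

/-- The observability index `ν = min {N : Rank O_N = Rank O_{N+j} for all j}`. -/
def obsIndex {n p : ℕ} (A : Matrix (Fin n) (Fin n) ℝ) (C : Matrix (Fin p) (Fin n) ℝ) : ℕ :=
  sInf {N : ℕ | ∀ j : ℕ, (obsMat A C (N + j)).rank = (obsMat A C N).rank}

/-- The Krylov/excitability matrix `E_N(x) = [x, Ax, …, A^{N-1} x]`. -/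
def excMat {n : ℕ} (A : Matrix (Fin n) (Fin n) ℝ) (x : Fin n → ℝ) (N : ℕ) :
    Matrix (Fin n) (Fin N) ℝ :=
  fun i k => (A ^ (k : ℕ)).mulVec x i

/-- The excitability index at `x`: `μ(x) = min {i : Rank E_i(x) = Rank E_{i+j}(x) for all j}`. -/
def excIndexAt {n : ℕ} (A : Matrix (Fin n) (Fin n) ℝ) (x : Fin n → ℝ) : ℕ :=
  sInf {i : ℕ | ∀ j : ℕ, (excMat A x (i + j)).rank = (excMat A x i).rank}

/-- The excitability index `μ = max_{x ∈ ℝⁿ} μ(x)`. -/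
def excIndex {n : ℕ} (A : Matrix (Fin n) (Fin n) ℝ) : ℕ :=
  sSup (Set.range (excIndexAt A))

/-- The Hankel matrix `Y_{N,T}` of the nominal output `y(k) = C A^k x0`; its `j`-th column is
the stacked vector `(y(j), …, y(j+N-1))`. -/
def hankelMat {n p : ℕ} (A : Matrix (Fin n) (Fin n) ℝ) (C : Matrix (Fin p) (Fin n) ℝ)
    (x0 : Fin n → ℝ) (N T : ℕ) : Matrix (Fin N × Fin p) (Fin (T - N + 1)) ℝ :=
  fun ir j => (C * A ^ ((j : ℕ) + (ir.1 : ℕ))).mulVec x0 ir.2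

/-- The Hankel information `Γ({y(k)}) = sup {Rank Y_{N,T} : N ≤ T}`. -/
def hankelInfo {n p : ℕ} (A : Matrix (Fin n) (Fin n) ℝ) (C : Matrix (Fin p) (Fin n) ℝ)
    (x0 : Fin n → ℝ) : ℕ :=
  sSup {r : ℕ | ∃ N T : ℕ, N ≤ T ∧ r = (hankelMat A C x0 N T).rank}

/-!
The Hankel matrix factors as `Y_{N,T} = O_N E_{T-N+1}(x0)`. Once `N ≥ ν` every `O_K` is a left
multiple of `O_N`, and once `M ≥ μ(x0)` every `E_K(x0)` is a right multiple of `E_M(x0)`. Hence if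
`N ≥ ν` and `T - N + 1 ≥ μ(x0)`, then every Hankel matrix equals `L * Y_{N,T} * R` for some `L` and
`R`, so `Y_{N,T}` has the largest rank. For `N = ⌊(T+1)/(p+1)⌋` the two conditions follow from the
two lower bounds on the horizon, because `N (p+1) ≤ T+1` gives `p (T+1) ≤ (p+1) (T+1-N)`.
-/

section StabilizationIndex

/-- The first index from which the sequence `r` is constant, with the junk value `0` if `r` never
becomes constant. The observability index and the excitability index at a state are the
stabilization indices of the rank sequences of `O_N` and `E_N(x)`. -/
def stabilizationIndex (r : ℕ → ℕ) : ℕ :=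
  sInf {N | ∀ j, r (N + j) = r N}

variable {r : ℕ → ℕ}

theorem stabilizationIndex_le (hr : Monotone r) {N : ℕ} (hN : ∀ k, r k ≤ r N) :
    stabilizationIndex r ≤ N :=
  Nat.sInf_le fun j => (hN (N + j)).antisymm (hr (Nat.le_add_right N j))

theorem apply_eq_of_stabilizationIndex_le (hr : Monotone r) (hb : BddAbove (Set.range r))
    {N k : ℕ} (hN : stabilizationIndex r ≤ N) (hk : N ≤ k) : r k = r N := by
  obtain ⟨m, hm⟩ : sSup (Set.range r) ∈ Set.range r := Nat.sSup_mem (Set.range_nonempty r) hb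
  have hmax : ∀ k, r k ≤ r m := fun k => (le_csSup hb ⟨k, rfl⟩).trans_eq hm.symm
  have hconst : ∀ j, r (stabilizationIndex r + j) = r (stabilizationIndex r) :=
    Nat.sInf_mem (s := {N | ∀ j, r (N + j) = r N})
      ⟨m, fun j => (hmax _).antisymm (hr (Nat.le_add_right m j))⟩
  obtain ⟨i, rfl⟩ := Nat.exists_eq_add_of_le hN
  obtain ⟨j, rfl⟩ := Nat.exists_eq_add_of_le hk
  rw [add_assoc, hconst, hconst]

end StabilizationIndex

theorem exists_eq_mul_of_range_mulVecLin_le {R m n o : Type*} [CommSemiring R] [Fintype n]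
    [Fintype o] {A : Matrix m n R} {B : Matrix m o R}
    (h : LinearMap.range B.mulVecLin ≤ LinearMap.range A.mulVecLin) :
    ∃ X : Matrix n o R, B = A * X := by
  classical
  have hcol : ∀ j, ∃ v, A *ᵥ v = B.col j := fun j => h ⟨Pi.single j 1, mulVec_single_one B j⟩
  choose v hv using hcol
  exact ⟨(of v)ᵀ, ext_col fun j => (hv j).symm⟩

theorem exists_eq_mul_of_stabilizationIndex_rank_le {K m : Type*} [Field K] [Finite m]
    {ι : ℕ → Type*} [∀ k, Fintype (ι k)] {M : ∀ k, Matrix m (ι k) K}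
    (hM : Monotone fun k => LinearMap.range (M k).mulVecLin) {N : ℕ}
    (hN : stabilizationIndex (fun k => (M k).rank) ≤ N) (k : ℕ) :
    ∃ X : Matrix (ι N) (ι k) K, M k = M N * X := by
  cases nonempty_fintype m
  have hmono : Monotone fun k => (M k).rank := fun _ _ h => Submodule.finrank_mono (hM h)
  have hbdd : BddAbove (Set.range fun k => (M k).rank) :=
    ⟨Fintype.card m, Set.forall_mem_range.2 fun k => (M k).rank_le_card_height⟩
  have hrank : (M (max N k)).rank = (M N).rank :=
    apply_eq_of_stabilizationIndex_le hmono hbdd hN (le_max_left N k)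
  have hrange : LinearMap.range (M N).mulVecLin = LinearMap.range (M (max N k)).mulVecLin :=
    Submodule.eq_of_le_of_finrank_eq (hM (le_max_left N k)) hrank.symm
  exact exists_eq_mul_of_range_mulVecLin_le ((hM (le_max_right N k)).trans hrange.ge)

theorem pow_mem_span_pow_lt_card {R m : Type*} [CommRing R] [Fintype m] [DecidableEq m]
    (A : Matrix m m R) (k : ℕ) :
    A ^ k ∈ Submodule.span R (Set.range fun i : Fin (Fintype.card m) => A ^ (i : ℕ)) := by
  nontriviality R
  have hdeg : (Polynomial.X ^ k %ₘ A.charpoly).degree < Fintype.card m :=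
    A.charpoly_degree_eq_dim ▸ Polynomial.degree_modByMonic_lt _ A.charpoly_monic
  rw [pow_eq_aeval_mod_charpoly, Polynomial.aeval_def, Polynomial.eval₂_eq_sum,
    Polynomial.sum_def]
  refine Submodule.sum_mem _ fun i hi => ?_
  have hi_lt : i < Fintype.card m :=
    Nat.cast_lt.1 ((Polynomial.le_degree_of_mem_supp i hi).trans_lt hdeg)
  rw [← Algebra.smul_def]
  exact Submodule.smul_mem _ _ (Submodule.subset_span ⟨⟨i, hi_lt⟩, rfl⟩)

section Excitability

variable {n : ℕ} (A : Matrix (Fin n) (Fin n) ℝ) (x : Fin n → ℝ)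

theorem excIndexAt_eq_stabilizationIndex :
    excIndexAt A x = stabilizationIndex fun N => (excMat A x N).rank :=
  rfl

theorem range_mulVecLin_excMat (N : ℕ) :
    LinearMap.range (excMat A x N).mulVecLin =
      Submodule.span ℝ (Set.range fun k : Fin N => (A ^ (k : ℕ)) *ᵥ x) :=
  range_mulVecLin _

theorem monotone_range_mulVecLin_excMat :
    Monotone fun N => LinearMap.range (excMat A x N).mulVecLin := by
  intro N N' hN
  simp only [range_mulVecLin_excMat]
  exact Submodule.span_mono (Set.range_subset_iff.2 fun k => ⟨Fin.castLE hN k, rfl⟩)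

theorem range_mulVecLin_excMat_le (N : ℕ) :
    LinearMap.range (excMat A x N).mulVecLin ≤ LinearMap.range (excMat A x n).mulVecLin := by
  rw [range_mulVecLin_excMat, range_mulVecLin_excMat, Submodule.span_le, Set.range_subset_iff]
  intro k
  have h := Submodule.mem_map_of_mem (f := (mulVecBilin ℝ ℝ).flip x)
    (pow_mem_span_pow_lt_card A k)
  rw [Submodule.map_span, ← Set.range_comp, Fintype.card_fin] at h
  exact h

theorem excIndexAt_le_dim : excIndexAt A x ≤ n := by
  rw [excIndexAt_eq_stabilizationIndex]
  exact stabilizationIndex_le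
    (fun _ _ h => Submodule.finrank_mono (monotone_range_mulVecLin_excMat A x h))
    fun k => Submodule.finrank_mono (range_mulVecLin_excMat_le A x k)

theorem excIndexAt_le_excIndex : excIndexAt A x ≤ excIndex A :=
  le_csSup ⟨n, Set.forall_mem_range.2 (excIndexAt_le_dim A)⟩ ⟨x, rfl⟩

variable {A x}

theorem exists_excMat_eq_mul {N : ℕ} (hN : excIndexAt A x ≤ N) (k : ℕ) :
    ∃ R : Matrix (Fin N) (Fin k) ℝ, excMat A x k = excMat A x N * R := by
  rw [excIndexAt_eq_stabilizationIndex] at hN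
  exact exists_eq_mul_of_stabilizationIndex_rank_le (monotone_range_mulVecLin_excMat A x) hN k

end Excitability

section Observability

variable {n p : ℕ} (A : Matrix (Fin n) (Fin n) ℝ) (C : Matrix (Fin p) (Fin n) ℝ)

theorem obsIndex_eq_stabilizationIndex :
    obsIndex A C = stabilizationIndex fun N => (obsMat A C N)ᵀ.rank := by
  simp only [rank_transpose, obsIndex, stabilizationIndex]

theorem monotone_range_mulVecLin_transpose_obsMat :
    Monotone fun N => LinearMap.range (obsMat A C N)ᵀ.mulVecLin := by
  intro N N' hN
  simp only [range_mulVecLin]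
  exact Submodule.span_mono
    (Set.range_subset_iff.2 fun ⟨i, s⟩ => ⟨(Fin.castLE hN i, s), rfl⟩)

variable {A C}

theorem exists_obsMat_eq_mul {N : ℕ} (hN : obsIndex A C ≤ N) (k : ℕ) :
    ∃ L : Matrix (Fin k × Fin p) (Fin N × Fin p) ℝ, obsMat A C k = L * obsMat A C N := by
  rw [obsIndex_eq_stabilizationIndex] at hN
  obtain ⟨X, hX⟩ := exists_eq_mul_of_stabilizationIndex_rank_le
    (monotone_range_mulVecLin_transpose_obsMat A C) hN k
  exact ⟨Xᵀ, by rw [← transpose_transpose (obsMat A C k), hX, transpose_mul, transpose_transpose]⟩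

end Observability

section Hankel

variable {n p : ℕ} (A : Matrix (Fin n) (Fin n) ℝ) (C : Matrix (Fin p) (Fin n) ℝ) (x0 : Fin n → ℝ)

theorem hankelMat_eq_obsMat_mul_excMat (N T : ℕ) :
    hankelMat A C x0 N T = obsMat A C N * excMat A x0 (T - N + 1) := by
  ext ⟨i, s⟩ j
  calc ((C * A ^ ((j : ℕ) + (i : ℕ))) *ᵥ x0) s
      = ((C * A ^ (i : ℕ)) *ᵥ (A ^ (j : ℕ) *ᵥ x0)) s := by
        rw [mulVec_mulVec, Matrix.mul_assoc, ← pow_add, add_comm]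
    _ = (obsMat A C N * excMat A x0 (T - N + 1)) (i, s) j := rfl

variable {A C x0}

theorem rank_hankelMat_le_rank_hankelMat {N T : ℕ} (hN : obsIndex A C ≤ N)
    (hTN : excIndexAt A x0 ≤ T - N + 1) (N' T' : ℕ) :
    (hankelMat A C x0 N' T').rank ≤ (hankelMat A C x0 N T).rank := by
  obtain ⟨L, hL⟩ := exists_obsMat_eq_mul hN N'
  obtain ⟨R, hR⟩ := exists_excMat_eq_mul hTN (T' - N' + 1)
  have hfactor : hankelMat A C x0 N' T' = L * hankelMat A C x0 N T * R := by
    simp only [hankelMat_eq_obsMat_mul_excMat, hL, hR, Matrix.mul_assoc]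
  rw [hfactor]
  exact (rank_mul_le_left _ R).trans (rank_mul_le_right L _)

theorem rank_hankelMat_eq_hankelInfo {N T : ℕ} (hNT : N ≤ T) (hN : obsIndex A C ≤ N)
    (hTN : excIndexAt A x0 ≤ T - N + 1) :
    (hankelMat A C x0 N T).rank = hankelInfo A C x0 := by
  rw [hankelInfo, eq_comm]
  refine IsGreatest.csSup_eq ⟨⟨N, T, hNT, rfl⟩, ?_⟩
  rintro _ ⟨N', T', -, rfl⟩
  exact rank_hankelMat_le_rank_hankelMat hN hTN N' T'

end Hankel

theorem safe_time_horizon_heuristic_general {n p : ℕ} (hp : 1 ≤ p)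
    (A : Matrix (Fin n) (Fin n) ℝ) (C : Matrix (Fin p) (Fin n) ℝ) (x0 : Fin n → ℝ)
    (T : ℕ)
    (hT1 : obsIndex A C * (p + 1) ≤ T + 1)
    (hT2 : excIndexAt A x0 * (p + 1) ≤ p * (T + 1)) :
    (hankelMat A C x0 ((T + 1) / (p + 1)) T).rank = hankelInfo A C x0 := by
  set N := (T + 1) / (p + 1)
  have hNT : N ≤ T := Nat.lt_succ_iff.1 (Nat.div_lt_self T.succ_pos (by omega))
  have hN : obsIndex A C ≤ N := (Nat.le_div_iff_mul_le p.succ_pos).2 hT1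
  have hadd : excIndexAt A x0 + N ≤ T + 1 := by
    refine Nat.le_of_mul_le_mul_right ?_ p.succ_pos
    calc (excIndexAt A x0 + N) * (p + 1)
        = excIndexAt A x0 * (p + 1) + N * (p + 1) := add_mul ..
      _ ≤ p * (T + 1) + (T + 1) := add_le_add hT2 (Nat.div_mul_le_self _ _)
      _ = (T + 1) * (p + 1) := by ring
  exact rank_hankelMat_eq_hankelInfo hNT hN (by omega)

/-- **Safe time horizon length for the heuristic `N(T) = ⌊(T+1)/(p+1)⌋`.** If
`T̄ + 1 ≥ ν (p+1)` and `p (T̄ + 1) ≥ μ (p+1)`, then `Rank Y_{N(T̄),T̄} = Γ({y(k)})`. -/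
theorem safe_time_horizon_heuristic {n p : ℕ} (hp : 1 ≤ p)
    (A : Matrix (Fin n) (Fin n) ℝ) (C : Matrix (Fin p) (Fin n) ℝ) (x0 : Fin n → ℝ)
    (T : ℕ)
    (hT1 : obsIndex A C * (p + 1) ≤ T + 1)
    (hT2 : excIndex A * (p + 1) ≤ p * (T + 1)) :
    (hankelMat A C x0 ((T + 1) / (p + 1)) T).rank = hankelInfo A C x0 :=
  safe_time_horizon_heuristic_general hp A C x0 T hT1
    ((Nat.mul_le_mul_right _ (excIndexAt_le_excIndex A x0)).trans hT2)
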